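/- arXiv:2603.10509 — 7 statements merged into one kernel-verified Lean document; each statement's English description precedes it below -/
import Mathlib

section
/- Let L be a symmetric real N×N matrix satisfying the EEP condition with respect to a partition of the N nodes into k nonempty clusters, let σ ∈ ℝ, and let F_1,…,F_k, H_1,…,H_k ∈ ℝ^{m×m} be arbitrary real m×m matrices. Define the operator 𝓛 = Σ_{l=1}^k E^l ⊗ F_l − σ Σ_{l=1}^k (L E^l) ⊗ H_l ∈ ℝ^{Nm×Nm}, where ⊗ denotes the Kronecker product. Then the synchronization subspace S is invariant under 𝓛, i.e., 𝓛 x ∈ S for every x ∈ S. -/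
open Matrix Kronecker BigOperators

/-- For a symmetric matrix `L` satisfying the EEP condition with respect to a
partition into `k` nonempty clusters (encoded by the surjective cluster map `c`), the operator
`𝓛 = ∑ l, E^l ⊗ F_l − σ • ∑ l, (L E^l) ⊗ H_l` leaves the synchronization subspace `S`
(vectors constant on clusters componentwise) invariant. -/
theorem synchronization_subspace_invariant
    {N k m : ℕ} (c : Fin N → Fin k) (hc : Function.Surjective c)
    (L : Matrix (Fin N) (Fin N) ℝ) (hL : L.IsSymm)
    (hEEP : ∀ (β : Fin k) (i j : Fin N), c i = c j →
      ∑ p ∈ Finset.univ.filter (fun p => c p = β), L i p =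
      ∑ p ∈ Finset.univ.filter (fun p => c p = β), L j p)
    (σ : ℝ) (F H : Fin k → Matrix (Fin m) (Fin m) ℝ)
    (E : Fin k → Matrix (Fin N) (Fin N) ℝ)
    (hE : ∀ l, E l = Matrix.diagonal (fun i => if c i = l then (1 : ℝ) else 0))
    (𝓛 : Matrix (Fin N × Fin m) (Fin N × Fin m) ℝ)
    (h𝓛 : 𝓛 = (∑ l, (E l) ⊗ₖ (F l)) - σ • ∑ l, ((L * E l) ⊗ₖ (H l)))
    (x : Fin N × Fin m → ℝ)
    (hx : ∀ (i j : Fin N) (a : Fin m), c i = c j → x (i, a) = x (j, a)) :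
    ∀ (i j : Fin N) (a : Fin m), c i = c j →
      (𝓛.mulVec x) (i, a) = (𝓛.mulVec x) (j, a) := by
  have entry : ∀ i a p b, 𝓛 (i, a) (p, b) =
      (if i = p then F (c i) a b else 0) - σ * (L i p * H (c p) a b) := by
    intro i a p b
    rw [h𝓛]
    simp only [Matrix.sub_apply, Matrix.smul_apply, Matrix.sum_apply, Matrix.kroneckerMap_apply,
      hE, Matrix.mul_diagonal, smul_eq_mul]
    congr 1
    · by_cases h : i = p
      · subst h
        simp
      · simp [Matrix.diagonal_apply_ne _ h, h]
    · simp
  obtain ⟨s, hs⟩ := hc.hasRightInverse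
  have key : ∀ i a, (𝓛.mulVec x) (i, a) =
      (∑ b, F (c i) a b * x (i, b)) -
        σ * ∑ β, (∑ p ∈ Finset.univ.filter (fun p => c p = β), L i p) *
          (∑ b, H β a b * x (s β, b)) := by
    intro i a
    have h1 : (𝓛.mulVec x) (i, a) = ∑ p, ((∑ b, if i = p then F (c i) a b * x (p, b) else 0) -
        σ * (L i p * ∑ b, H (c p) a b * x (s (c p), b))) := by
      simp only [Matrix.mulVec, dotProduct, Fintype.sum_prod_type, entry]
      refine Finset.sum_congr rfl fun p _ => ?_
      rw [Finset.mul_sum, Finset.mul_sum, ← Finset.sum_sub_distrib]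
      refine Finset.sum_congr rfl fun b _ => ?_
      rw [hx (s (c p)) p b (hs (c p))]
      split_ifs <;> ring
    rw [h1, Finset.sum_sub_distrib, ← Finset.mul_sum]
    congr 1
    · rw [Finset.sum_comm]
      simp
    · congr 1
      rw [← Finset.sum_fiberwise Finset.univ c]
      refine Finset.sum_congr rfl fun β _ => ?_
      rw [Finset.sum_mul]
      refine Finset.sum_congr rfl fun p hp => ?_
      rw [(Finset.mem_filter.mp hp).2]
  intro i j a hij
  rw [key, key, hij]
  congr 1
  · exact Finset.sum_congr rfl fun b _ => by rw [hx i j b hij]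
  · congr 1
    exact Finset.sum_congr rfl fun β _ => by rw [hEEP β i j hij]
end

section
/- Let L be a symmetric real N×N matrix satisfying the EEP condition with respect to a partition of the N nodes into k nonempty clusters, let σ ∈ ℝ, and let F_1,…,F_k, H_1,…,H_k ∈ ℝ^{m×m} be arbitrary real m×m matrices. Define the operator 𝓛 = Σ_{l=1}^k E^l ⊗ F_l − σ Σ_{l=1}^k (L E^l) ⊗ H_l ∈ ℝ^{Nm×Nm}, where ⊗ denotes the Kronecker product. Then the transversal subspace S_⊥ is invariant under 𝓛, i.e., 𝓛 x ∈ S_⊥ for every x ∈ S_⊥. -/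
open Matrix Kronecker BigOperators

/-- For a symmetric matrix `L` satisfying the EEP condition with respect to a
partition into `k` nonempty clusters (encoded by the surjective cluster map `c`), the operator
`𝓛 = ∑ l, E^l ⊗ F_l − σ • ∑ l, (L E^l) ⊗ H_l` leaves the transversal subspace `S_⊥`
(vectors with zero cluster sums in every component) invariant. -/
theorem transversal_subspace_invariant
    {N k m : ℕ} (c : Fin N → Fin k) (hc : Function.Surjective c)
    (L : Matrix (Fin N) (Fin N) ℝ) (hL : L.IsSymm)
    (hEEP : ∀ (β : Fin k) (i j : Fin N), c i = c j →
      ∑ p ∈ Finset.univ.filter (fun p => c p = β), L i p =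
      ∑ p ∈ Finset.univ.filter (fun p => c p = β), L j p)
    (σ : ℝ) (F H : Fin k → Matrix (Fin m) (Fin m) ℝ)
    (E : Fin k → Matrix (Fin N) (Fin N) ℝ)
    (hE : ∀ l, E l = Matrix.diagonal (fun i => if c i = l then (1 : ℝ) else 0))
    (𝓛 : Matrix (Fin N × Fin m) (Fin N × Fin m) ℝ)
    (h𝓛 : 𝓛 = (∑ l, (E l) ⊗ₖ (F l)) - σ • ∑ l, ((L * E l) ⊗ₖ (H l)))
    (x : Fin N × Fin m → ℝ)
    (hx : ∀ (l : Fin k) (a : Fin m),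
      ∑ j ∈ Finset.univ.filter (fun j => c j = l), x (j, a) = 0) :
    ∀ (l : Fin k) (a : Fin m),
      ∑ j ∈ Finset.univ.filter (fun j => c j = l), (𝓛.mulVec x) (j, a) = 0 := by
  intro l a
  have hent : ∀ j p b, 𝓛 (j, a) (p, b)
      = (if j = p then F (c p) a b else 0) - σ * (L j p * H (c p) a b) := by
    intro j p b
    rw [h𝓛]
    simp only [Matrix.sub_apply, Matrix.smul_apply, Matrix.sum_apply, Matrix.kroneckerMap_apply,
      hE, Matrix.mul_diagonal, Matrix.diagonal_apply, smul_eq_mul]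
    congr 1
    · by_cases h : j = p
      · subst h; simp
      · simp [h]
    · simp
  have hg : ∀ p q b, c p = c q →
      ∑ j ∈ Finset.univ.filter (fun j => c j = l), 𝓛 (j, a) (p, b)
      = ∑ j ∈ Finset.univ.filter (fun j => c j = l), 𝓛 (j, a) (q, b) := by
    intro p q b h
    have h1 := hEEP l p q h
    simp only [hent, Finset.sum_sub_distrib, ← Finset.mul_sum, ← Finset.sum_mul]
    have h2 : ∀ p, ∑ j ∈ Finset.univ.filter (fun j => c j = l), L j p
        = ∑ j ∈ Finset.univ.filter (fun j => c j = l), L p j :=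
      fun p => Finset.sum_congr rfl fun j _ => hL.apply p j
    rw [h2 p, h2 q, h1, h]
    simp [Finset.sum_ite_eq', h]
  simp only [Matrix.mulVec, dotProduct]
  rw [Finset.sum_comm]
  simp only [← Finset.sum_mul]
  rw [Fintype.sum_prod_type_right]
  refine Finset.sum_eq_zero fun b _ => ?_
  rw [← Finset.sum_fiberwise Finset.univ c]
  refine Finset.sum_eq_zero fun β _ => ?_
  obtain ⟨q, hq⟩ := hc β
  rw [Finset.sum_congr rfl (g := fun p =>
    (∑ j ∈ Finset.univ.filter (fun j => c j = l), 𝓛 (j, a) (q, b)) * x (p, b)),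
    ← Finset.mul_sum, hx, mul_zero]
  intro p hp
  rw [hg p q b (by rw [(Finset.mem_filter.1 hp).2, hq])]
end

section
/- Let L ∈ ℝ^{N×N} satisfy the EEP condition with respect to a partition of the N nodes into k nonempty clusters, let σ ∈ ℝ, and let F, H : ℝ^m → ℝ^m be arbitrary maps. Define the coupled vector field G(x)_i = F(x_i) − σ Σ_{j=1}^N L_{ij} H(x_j) on (ℝ^m)^N. If x ∈ (ℝ^m)^N is constant on clusters (x_i = x_j whenever c(i) = c(j)), then G(x) is also constant on clusters: G(x)_i = G(x)_j whenever c(i) = c(j). -/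
open Matrix BigOperators

/-- If `L` satisfies the EEP condition with respect to a partition into `k`
nonempty clusters, then the coupled vector field `G(x)_i = F(x_i) − σ ∑_j L_{ij} H(x_j)`
maps cluster-constant states to cluster-constant states. -/
theorem coupled_field_preserves_cluster_constant
    {N k m : ℕ} (c : Fin N → Fin k) (hc : Function.Surjective c)
    (L : Matrix (Fin N) (Fin N) ℝ)
    (hEEP : ∀ (β : Fin k) (i j : Fin N), c i = c j →
      ∑ p ∈ Finset.univ.filter (fun p => c p = β), L i p =
      ∑ p ∈ Finset.univ.filter (fun p => c p = β), L j p)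
    (σ : ℝ) (F H : (Fin m → ℝ) → (Fin m → ℝ))
    (G : (Fin N → Fin m → ℝ) → (Fin N → Fin m → ℝ))
    (hG : ∀ x i, G x i = F (x i) - σ • ∑ j, L i j • H (x j))
    (x : Fin N → Fin m → ℝ)
    (hx : ∀ i j, c i = c j → x i = x j) :
    ∀ i j, c i = c j → G x i = G x j := by
  intro i j hij
  obtain ⟨r, hr⟩ := hc.hasRightInverse
  have key : ∀ i, ∑ p, L i p • H (x p) =
      ∑ β, (∑ p ∈ Finset.univ.filter (fun p => c p = β), L i p) • H (x (r β)) := by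
    intro i
    rw [← Finset.sum_fiberwise (s := Finset.univ) (g := c)]
    refine Finset.sum_congr rfl fun β _ => ?_
    rw [Finset.sum_smul]
    refine Finset.sum_congr rfl fun p hp => ?_
    rw [hx p (r β) ((Finset.mem_filter.mp hp).2.trans (hr β).symm)]
  rw [hG, hG, key, key, hx i j hij]
  simp only [fun β => hEEP β i j hij]
end

section
/- Let L ∈ ℝ^{N×N} satisfy the EEP condition with respect to a partition of the N nodes into k nonempty clusters with indicator matrix Q, and set B = (QᵀQ)^{-1} Qᵀ L Q ∈ ℝ^{k×k}. Let σ ∈ ℝ and F, H : ℝ^m → ℝ^m be arbitrary maps, and let G(x)_i = F(x_i) − σ Σ_{j=1}^N L_{ij} H(x_j) be the coupled vector field on (ℝ^m)^N. Then for every s ∈ (ℝ^m)^k, the cluster-constant state x defined by x_i = s_{c(i)} satisfies G(x)_i = F(s_{c(i)}) − σ Σ_{β=1}^k B_{c(i),β} H(s_β) for all nodes i; that is, the full network dynamics reduce to the quotient dynamics governed by B. -/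
open Matrix BigOperators

/-- For `L` satisfying the EEP condition with indicator matrix `Q` and quotient
matrix `B = (QᵀQ)⁻¹ Qᵀ L Q`, the coupled vector field restricted to any cluster-constant
state `x_i = s_{c(i)}` reduces to the quotient dynamics governed by `B`. -/
theorem full_dynamics_reduce_to_quotient
    {N k m : ℕ} (c : Fin N → Fin k) (hc : Function.Surjective c)
    (L : Matrix (Fin N) (Fin N) ℝ)
    (hEEP : ∀ (β : Fin k) (i j : Fin N), c i = c j →
      ∑ p ∈ Finset.univ.filter (fun p => c p = β), L i p =
      ∑ p ∈ Finset.univ.filter (fun p => c p = β), L j p)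
    (Q : Matrix (Fin N) (Fin k) ℝ)
    (hQ : ∀ j l, Q j l = if c j = l then 1 else 0)
    (B : Matrix (Fin k) (Fin k) ℝ)
    (hB : B = (Qᵀ * Q)⁻¹ * Qᵀ * L * Q)
    (σ : ℝ) (F H : (Fin m → ℝ) → (Fin m → ℝ))
    (G : (Fin N → Fin m → ℝ) → (Fin N → Fin m → ℝ))
    (hG : ∀ x i, G x i = F (x i) - σ • ∑ j, L i j • H (x j)) :
    ∀ (s : Fin k → Fin m → ℝ) (i : Fin N),
      G (fun i => s (c i)) i = F (s (c i)) - σ • ∑ β, B (c i) β • H (s β) := by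
  intro s i
  choose r hr using hc
  let B' : Matrix (Fin k) (Fin k) ℝ := fun α β =>
    ∑ p ∈ Finset.univ.filter (fun p => c p = β), L (r α) p
  have hLQ : L * Q = Q * B' := by
    ext a β
    simp only [Matrix.mul_apply, hQ, mul_ite, mul_one, mul_zero, ite_mul, one_mul, zero_mul,
      Finset.sum_ite_eq, Finset.mem_univ, if_true]
    rw [← Finset.sum_filter]
    exact hEEP β a (r (c a)) (hr (c a)).symm
  have hD : Qᵀ * Q = Matrix.diagonal
      (fun l => ((Finset.univ.filter (fun p => c p = l)).card : ℝ)) := by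
    ext a b
    rw [Matrix.mul_apply, Matrix.diagonal_apply]
    simp only [Matrix.transpose_apply, hQ]
    by_cases hab : a = b
    · subst hab
      rw [if_pos rfl, Finset.card_filter]
      push_cast
      refine Finset.sum_congr rfl fun p _ => ?_
      split_ifs <;> simp
    · rw [if_neg hab]
      apply Finset.sum_eq_zero
      intro p _
      by_cases h : c p = a
      · have : c p ≠ b := fun h' => hab (h.symm.trans h')
        simp [this]
      · simp [h]
  have hU : IsUnit (Qᵀ * Q).det := by
    rw [hD, Matrix.det_diagonal, isUnit_iff_ne_zero, Finset.prod_ne_zero_iff]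
    intro a _
    have : (Finset.univ.filter (fun p => c p = a)).card ≠ 0 :=
      Finset.card_ne_zero_of_mem (a := r a) (by simp [hr])
    exact_mod_cast this
  have hBB : B = B' := by
    rw [hB, Matrix.mul_assoc, hLQ, ← Matrix.mul_assoc, Matrix.mul_assoc (Qᵀ * Q)⁻¹,
      Matrix.nonsing_inv_mul _ hU, Matrix.one_mul]
  rw [hG, hBB]
  congr 2
  rw [← Finset.sum_fiberwise Finset.univ c]
  refine Finset.sum_congr rfl fun β _ => ?_
  have h1 : B' (c i) β = ∑ p ∈ Finset.univ.filter (fun p => c p = β), L i p :=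
    hEEP β _ _ (hr (c i))
  rw [h1, Finset.sum_smul]
  refine Finset.sum_congr rfl fun p hp => ?_
  rw [(Finset.mem_filter.mp hp).2]
end

section
/- Let L ∈ ℝ^{N×N} satisfy the EEP condition with respect to a partition of the N nodes into k nonempty clusters with indicator matrix Q, and set B = (QᵀQ)^{-1} Qᵀ L Q. Then for every cluster index β and every node i, B_{c(i),β} = Σ_{j : c(j)=β} L_{i,j}; in particular this cluster-input sum depends only on the cluster c(i) of i. -/
open Matrix BigOperators

/-- For `L` satisfying the EEP condition with indicator matrix `Q` and quotient
matrix `B = (QᵀQ)⁻¹ Qᵀ L Q`, the entry `B_{c(i),β}` equals the cluster-input sum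
`∑_{j : c(j)=β} L_{i,j}`, which therefore depends on `i` only through its cluster `c(i)`. -/
theorem quotient_matrix_entries_are_cluster_input_sums
    {N k : ℕ} (c : Fin N → Fin k) (hc : Function.Surjective c)
    (L : Matrix (Fin N) (Fin N) ℝ)
    (hEEP : ∀ (β : Fin k) (i j : Fin N), c i = c j →
      ∑ p ∈ Finset.univ.filter (fun p => c p = β), L i p =
      ∑ p ∈ Finset.univ.filter (fun p => c p = β), L j p)
    (Q : Matrix (Fin N) (Fin k) ℝ)
    (hQ : ∀ j l, Q j l = if c j = l then 1 else 0)
    (B : Matrix (Fin k) (Fin k) ℝ)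
    (hB : B = (Qᵀ * Q)⁻¹ * Qᵀ * L * Q) :
    ∀ (β : Fin k) (i : Fin N),
      B (c i) β = ∑ j ∈ Finset.univ.filter (fun j => c j = β), L i j := by
  obtain ⟨s, hs⟩ := hc.hasRightInverse
  let M : Matrix (Fin k) (Fin k) ℝ :=
    fun a β => ∑ p ∈ Finset.univ.filter (fun p => c p = β), L (s a) p
  have hLQ : L * Q = Q * M := by
    ext i β
    have h1 : (L * Q) i β = ∑ p ∈ Finset.univ.filter (fun p => c p = β), L i p := by
      simp [Matrix.mul_apply, hQ, Finset.sum_filter]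
    have h2 : (Q * M) i β = M (c i) β := by
      simp [Matrix.mul_apply, hQ]
    rw [h1, h2]
    exact hEEP β i (s (c i)) (hs (c i)).symm
  have hD : Qᵀ * Q =
      Matrix.diagonal (fun l => ∑ j : Fin N, if c j = l then (1 : ℝ) else 0) := by
    ext a b
    by_cases hab : a = b
    · subst hab
      rw [Matrix.diagonal_apply_eq, Matrix.mul_apply]
      apply Finset.sum_congr rfl
      intro j _
      simp only [Matrix.transpose_apply, hQ]
      split_ifs <;> norm_num
    · rw [Matrix.diagonal_apply_ne _ hab, Matrix.mul_apply]
      apply Finset.sum_eq_zero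
      intro j _
      simp only [Matrix.transpose_apply, hQ]
      by_cases h : c j = a
      · have h' : c j ≠ b := fun h2 => hab (h.symm.trans h2)
        simp [h']
      · simp [h]
  have hdet : IsUnit (Qᵀ * Q).det := by
    rw [hD, Matrix.det_diagonal, isUnit_iff_ne_zero, Finset.prod_ne_zero_iff]
    intro l _
    apply ne_of_gt
    apply Finset.sum_pos'
    · intro j _
      split_ifs <;> norm_num
    · exact ⟨s l, Finset.mem_univ _, by simp [hs l]⟩
  have hBM : B = M := by
    rw [hB, Matrix.mul_assoc, hLQ, ← Matrix.mul_assoc, Matrix.mul_assoc _ Qᵀ Q,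
      Matrix.nonsing_inv_mul _ hdet, Matrix.one_mul]
  intro β i
  rw [hBM]
  exact hEEP β (s (c i)) i (hs (c i))
end

section
/- Let B ∈ ℝ^{k×k}, σ ∈ ℝ, let F, H : ℝ^m → ℝ^m be odd maps, and define the quotient vector field G_B(s)_i = F(s_i) − σ Σ_{j=1}^k B_{ij} H(s_j) on (ℝ^m)^k. Fix a cluster index i and suppose there is an involution π on the remaining indices {j : j ≠ i} such that s_{π(j)} = −s_j and B_{i,π(j)} = B_{i,j} for all j ≠ i. If s_i = 0, then G_B(s)_i = 0; that is, the amplitude-death state of cluster i is invariant when its neighboring clusters split into antisynchronized (or zero) states. -/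
open Matrix BigOperators

/-- For odd maps `F`, `H`, if the indices other than `i` admit an involution `π`
(fixing the complement of `i`) under which the states are antisynchronized (`s_{π(j)} = −s_j`)
and the row `B_i` is invariant (`B_{i,π(j)} = B_{i,j}`), then the amplitude-death state
`s_i = 0` of cluster `i` is invariant: `G_B(s)_i = 0`. -/
theorem amplitude_death_invariant_under_antisynchronized_neighbors
    {k m : ℕ} (B : Matrix (Fin k) (Fin k) ℝ) (σ : ℝ)
    (F H : (Fin m → ℝ) → (Fin m → ℝ))
    (hF : ∀ x, F (-x) = -F x) (hH : ∀ x, H (-x) = -H x)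
    (i : Fin k) (π : Fin k → Fin k)
    (hπmem : ∀ j, j ≠ i → π j ≠ i)
    (hπ : ∀ j, j ≠ i → π (π j) = j)
    (s : Fin k → Fin m → ℝ)
    (hs : ∀ j, j ≠ i → s (π j) = -s j)
    (hB : ∀ j, j ≠ i → B i (π j) = B i j)
    (hsi : s i = 0) :
    F (s i) - σ • ∑ j, B i j • H (s j) = 0 := by
  have odd0 : ∀ G : (Fin m → ℝ) → (Fin m → ℝ), (∀ x, G (-x) = -G x) → G 0 = 0 := by
    intro G hG
    have h := hG 0
    rw [neg_zero] at h
    exact self_eq_neg.mp h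
  have hsum : ∑ j ∈ Finset.univ.erase i, B i j • H (s j) = 0 := by
    have h : ∑ j ∈ Finset.univ.erase i, B i j • H (s j)
        = ∑ j ∈ Finset.univ.erase i, -(B i j • H (s j)) := by
      refine Finset.sum_bij' (fun j _ => π j) (fun j _ => π j) ?_ ?_ ?_ ?_ ?_
      · intro j hj
        simpa using hπmem j (Finset.ne_of_mem_erase hj)
      · intro j hj
        simpa using hπmem j (Finset.ne_of_mem_erase hj)
      · intro j hj
        exact hπ j (Finset.ne_of_mem_erase hj)
      · intro j hj
        exact hπ j (Finset.ne_of_mem_erase hj)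
      · intro j hj
        have hj' := Finset.ne_of_mem_erase hj
        rw [hs j hj', hB j hj', hH, smul_neg, neg_neg]
    rw [Finset.sum_neg_distrib] at h
    exact self_eq_neg.mp h
  rw [← Finset.add_sum_erase _ _ (Finset.mem_univ i), hsum, hsi, odd0 F hF, odd0 H hH]
  simp
end

section
/- Let λ, ω, σ, σ_x, σ_y, W ∈ ℝ with ω ≠ 0, and suppose the discriminant D := (σ W (σ_y − σ_x))² − 4ω² satisfies D ≥ 0. For either sign ε ∈ {−1, +1}, set c = (σ W (σ_y − σ_x) + ε √D)/(2ω), and suppose additionally that λ − ω c − σ σ_x W ≥ 0. Define x* = √((λ − ω c − σ σ_x W)/(1 + c²)) and y* = c x*. Then both (x*, y*) and (−x*, −y*) are solutions of the steady-state Stuart–Landau equations: (λ − (x² + y²)) x − ω y − σ σ_x W x = 0 and (λ − (x² + y²)) y + ω x − σ σ_y W y = 0. (These are the oscillation-death states of a Stuart–Landau cluster with effective coupling weight W.) -/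
/-- Explicit oscillation-death steady states of a Stuart–Landau cluster with
effective coupling weight `W`: for either sign `ε = ±1`, with
`c = (σW(σ_y − σ_x) + ε√D)/(2ω)` where `D = (σW(σ_y − σ_x))² − 4ω² ≥ 0`, and
`x* = √((λ − ωc − σσ_xW)/(1 + c²))`, `y* = c x*`, both `(x*, y*)` and `(−x*, −y*)` solve the
steady-state Stuart–Landau equations. -/
theorem stuart_landau_oscillation_death_states
    (lam omega sigma sigmax sigmay W : ℝ) (homega : omega ≠ 0)
    (D : ℝ) (hD : D = (sigma * W * (sigmay - sigmax))^2 - 4 * omega^2)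
    (hDpos : 0 ≤ D)
    (eps : ℝ) (heps : eps = -1 ∨ eps = 1)
    (c : ℝ) (hc : c = (sigma * W * (sigmay - sigmax) + eps * Real.sqrt D) / (2 * omega))
    (hrad : 0 ≤ lam - omega * c - sigma * sigmax * W)
    (xs ys : ℝ)
    (hxs : xs = Real.sqrt ((lam - omega * c - sigma * sigmax * W) / (1 + c^2)))
    (hys : ys = c * xs) :
    ((lam - (xs^2 + ys^2)) * xs - omega * ys - sigma * sigmax * W * xs = 0 ∧
     (lam - (xs^2 + ys^2)) * ys + omega * xs - sigma * sigmay * W * ys = 0) ∧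
    ((lam - ((-xs)^2 + (-ys)^2)) * (-xs) - omega * (-ys) - sigma * sigmax * W * (-xs) = 0 ∧
     (lam - ((-xs)^2 + (-ys)^2)) * (-ys) + omega * (-xs) - sigma * sigmay * W * (-ys) = 0) := by
  have h1 : xs^2 * (1 + c^2) = lam - omega * c - sigma * sigmax * W := by
    have hpos : (0:ℝ) < 1 + c^2 := by positivity
    rw [hxs, Real.sq_sqrt (div_nonneg hrad hpos.le), div_mul_cancel₀ _ hpos.ne']
  have h2 : 2 * omega * c - sigma * W * (sigmay - sigmax) = eps * Real.sqrt D := by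
    rw [hc]
    field_simp
    ring
  have he : eps^2 = 1 := by
    rcases heps with h | h <;> rw [h] <;> norm_num
  have h3 : (2 * omega * c - sigma * W * (sigmay - sigmax))^2 = D := by
    rw [h2, mul_pow, he, Real.sq_sqrt hDpos, one_mul]
  have h4 : omega * c^2 - sigma * W * (sigmay - sigmax) * c + omega = 0 := by
    have h5 : (4 * omega) * (omega * c^2 - sigma * W * (sigmay - sigmax) * c + omega) = 0 := by
      linear_combination h3 + hD
    exact (mul_eq_zero.mp h5).resolve_left (mul_ne_zero (by norm_num) homega)
  clear hxs hc
  subst hys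
  refine ⟨⟨?_, ?_⟩, ?_, ?_⟩
  · linear_combination (-xs) * h1
  · linear_combination (-c * xs) * h1 + xs * h4
  · linear_combination xs * h1
  · linear_combination (c * xs) * h1 - xs * h4
end
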